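/- Let n ≥ 1 and let A be an n×n complex matrix. Then ∫_{U(n)} per(u A u*) du = ∫_{U(n)} ((u A u*)_{11})^n du, where the integrals are over the unitary group U(n) with respect to its Haar probability measure and per denotes the permanent. -/

import Mathlib

open MeasureTheory Matrix
open scoped ComplexOrder

noncomputable instance {n : ℕ} : MeasurableSpace (Matrix.unitaryGroup (Fin n) ℂ) := borel _
instance {n : ℕ} : BorelSpace (Matrix.unitaryGroup (Fin n) ℂ) := ⟨rfl⟩

/-- conjugation of `A` by the unitary `u` : `u * A * u*` -/
noncomputable def conjU {n : ℕ} (A : Matrix (Fin n) (Fin n) ℂ) (u : Matrix.unitaryGroup (Fin n) ℂ) :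
    Matrix (Fin n) (Fin n) ℂ :=
  (u : Matrix (Fin n) (Fin n) ℂ) * A * star (u : Matrix (Fin n) (Fin n) ℂ)

/-!
Write `B = u A u*` for the random conjugate and `e` for a standard basis vector. By invariance of
`μ`, the moment `∫ (y* B x) ^ k` depends only on the unitary orbit of the pair `(y, x)`, so we may
take `y` to be a multiple of `e`. Averaging over the unitaries that fix `e` and multiply its
orthogonal complement by a root of unity then kills every component of `x` other than the one
along `e`; hence `∫ (y* B x) ^ k = (y* x) ^ k ∫ (e* B e) ^ k`. Applying Ryser's formula for the
permanent twice, `k! per (Y* B X)` is a signed sum of `k`-th powers `(y* B x) ^ k`, with `y` and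
`x` sums of columns of the `k`-column matrices `Y` and `X`. So `∫ per (Y* B X)` is
`∫ (e* B e) ^ k` times the value `per (Y* X)` of the same signed sum at `B = 1`.
-/

theorem conjTranspose_mul_mul_apply_eq_dotProduct {ι m l n R : Type*} [Fintype m] [Fintype l]
    [NonUnitalSemiring R] [Star R] (Y : Matrix m ι R) (B : Matrix m l R) (X : Matrix l n R) (i : ι)
    (j : n) : (Yᴴ * B * X) i j = star (Y.col i) ⬝ᵥ B *ᵥ X.col j := by
  rw [Matrix.mul_assoc, mul_apply']
  rfl

section Permanent

variable {ι κ R : Type*} [Fintype ι] [DecidableEq ι]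

theorem sum_surjective_eq_sum_neg_one_pow_card_smul {G : Type*} [AddCommGroup G] [Fintype κ]
    [DecidableEq κ] (F : (κ → ι) → G) :
    ∑ f with Function.Surjective f, F f =
      ∑ S : Finset ι, (-1 : ℤ) ^ S.card • ∑ f ∈ Fintype.piFinset fun _ : κ => Sᶜ, F f := by
  let avoiding (i : ι) : Finset (κ → ι) := {f | ∀ k, f k ≠ i}
  have h_surj : ({f | Function.Surjective f} : Finset (κ → ι)) =
      Finset.univ.inf fun i => (avoiding i)ᶜ := by
    ext f
    simp only [avoiding, Finset.mem_filter_univ, Finset.mem_inf, Finset.mem_univ,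
      Finset.mem_compl, Function.Surjective]
    push Not
    grind
  have h_pi (S : Finset ι) : (Fintype.piFinset fun _ : κ => Sᶜ) = S.inf avoiding := by
    ext f
    simp only [Fintype.mem_piFinset, Finset.mem_compl, Finset.mem_inf, Finset.mem_filter_univ,
      avoiding]
    grind
  simp only [h_surj, h_pi, Finset.inclusion_exclusion_sum_inf_compl, Finset.powerset_univ]

theorem sum_surjective_eq_sum_perm {G : Type*} [AddCommMonoid G] (F : (ι → ι) → G) :
    ∑ f with Function.Surjective f, F f = ∑ σ : Equiv.Perm ι, F σ := by
  symm
  refine Finset.sum_nbij (fun σ => σ) (by simp [Equiv.surjective]) ?_ ?_ fun _ _ => rfl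
  · exact DFunLike.coe_injective.injOn
  · intro f hf
    have hf : Function.Surjective f := by simpa using hf
    exact ⟨Equiv.ofBijective f (Finite.surjective_iff_bijective.1 hf), by simp, rfl⟩

theorem permanent_eq_sum_prod_apply_perm [CommSemiring R] (M : Matrix ι ι R) :
    M.permanent = ∑ σ : Equiv.Perm ι, ∏ i, M i (σ i) := by
  rw [← permanent_transpose]
  rfl

variable [CommRing R]

theorem permanent_eq_sum_neg_one_pow_card_mul_prod_sum (M : Matrix ι ι R) :
    M.permanent = ∑ S : Finset ι, (-1) ^ S.card * ∏ i, ∑ j ∈ Sᶜ, M i j := by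
  have h_prod (S : Finset ι) :
      ∏ i, ∑ j ∈ Sᶜ, M i j = ∑ f ∈ Fintype.piFinset fun _ : ι => Sᶜ, ∏ i, M i (f i) :=
    Finset.prod_univ_sum _ _
  rw [permanent_eq_sum_prod_apply_perm, ← sum_surjective_eq_sum_perm fun f => ∏ i, M i (f i),
    sum_surjective_eq_sum_neg_one_pow_card_smul]
  simp [h_prod]

theorem factorial_mul_prod_eq_sum_neg_one_pow_card_mul_sum_pow (a : ι → R) :
    (Fintype.card ι).factorial * ∏ i, a i =
      ∑ S : Finset ι, (-1) ^ S.card * (∑ i ∈ Sᶜ, a i) ^ Fintype.card ι := by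
  simpa [permanent, Equiv.prod_comp, Fintype.card_perm] using
    permanent_eq_sum_neg_one_pow_card_mul_prod_sum (of fun _ : ι => a)

theorem factorial_mul_permanent_eq_sum_neg_one_pow_card_mul_sum_pow (M : Matrix ι ι R) :
    (Fintype.card ι).factorial * M.permanent =
      ∑ S : Finset ι × Finset ι, (-1) ^ (S.1.card + S.2.card) *
        (∑ i ∈ S.1ᶜ, ∑ j ∈ S.2ᶜ, M i j) ^ Fintype.card ι := by
  rw [permanent_eq_sum_neg_one_pow_card_mul_prod_sum, Finset.mul_sum, Fintype.sum_prod_type_right]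
  refine Finset.sum_congr rfl fun T _ => ?_
  rw [mul_left_comm, factorial_mul_prod_eq_sum_neg_one_pow_card_mul_sum_pow, Finset.mul_sum]
  refine Finset.sum_congr rfl fun S _ => ?_
  ring

theorem factorial_mul_permanent_conjTranspose_mul_mul {m : Type*} [Fintype m] [StarRing R]
    (Y X : Matrix m ι R) (B : Matrix m m R) :
    (Fintype.card ι).factorial * (Yᴴ * B * X).permanent =
      ∑ S : Finset ι × Finset ι, (-1) ^ (S.1.card + S.2.card) *
        (star (∑ i ∈ S.1ᶜ, Y.col i) ⬝ᵥ B *ᵥ ∑ j ∈ S.2ᶜ, X.col j) ^ Fintype.card ι := by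
  rw [factorial_mul_permanent_eq_sum_neg_one_pow_card_mul_sum_pow]
  refine Finset.sum_congr rfl fun S _ => ?_
  rw [star_sum, mulVec_sum, sum_dotProduct]
  simp only [dotProduct_sum, conjTranspose_mul_mul_apply_eq_dotProduct]

end Permanent

section RootsOfUnity

variable {R : Type*} [CommRing R] [IsDomain R] {ζ : R} {N : ℕ}

theorem sum_pow_pow_eq_zero_of_isPrimitiveRoot (hζ : IsPrimitiveRoot ζ N) {l : ℕ} (hl : l ≠ 0)
    (hlN : l < N) : ∑ j ∈ Finset.range N, (ζ ^ j) ^ l = 0 := by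
  have h_ne : 1 - ζ ^ l ≠ 0 := sub_ne_zero_of_ne (hζ.pow_ne_one_of_pos_of_lt hl hlN).symm
  refine eq_zero_of_ne_zero_of_mul_left_eq_zero h_ne ?_
  simp only [pow_right_comm ζ _ l]
  rw [mul_neg_geom_sum, pow_right_comm, hζ.pow_eq_one, one_pow, sub_self]

theorem sum_add_pow_mul_pow_of_isPrimitiveRoot (hζ : IsPrimitiveRoot ζ N) {k : ℕ} (hk : k < N)
    (a b : R) : ∑ j ∈ Finset.range N, (a + ζ ^ j * b) ^ k = N * a ^ k := by
  simp only [add_comm a, add_pow, mul_pow, mul_assoc]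
  rw [Finset.sum_comm, Finset.sum_eq_single 0]
  · simp
  · intro l hl hl0
    have hlN : l < N := (Finset.mem_range_succ_iff.1 hl).trans_lt hk
    rw [← Finset.sum_mul, sum_pow_pow_eq_zero_of_isPrimitiveRoot hζ hl0 hlN, zero_mul]
  · simp

end RootsOfUnity

section UnitaryGroup

variable {m : Type*} [Fintype m] [DecidableEq m]

theorem diagonal_mem_unitaryGroup {R : Type*} [CommRing R] [StarRing R] {d : m → R}
    (hd : ∀ i, d i ∈ unitary R) : diagonal d ∈ unitaryGroup m R := by
  simp [mem_unitaryGroup_iff, star_eq_conjTranspose, diagonal_conjTranspose,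
    Unitary.mul_star_self_of_mem (hd _)]

variable {𝕜 : Type*} [RCLike 𝕜]

instance compactSpace_unitaryGroup : CompactSpace (unitaryGroup m 𝕜) := by
  have h_closed : IsClosed (unitaryGroup m 𝕜 : Set (Matrix m m 𝕜)) := isClosed_unitary
  have h_polydisc : IsCompact (Set.univ.pi fun _ : m => Set.univ.pi fun _ : m =>
      Metric.closedBall (0 : 𝕜) 1) :=
    isCompact_univ_pi fun _ => isCompact_univ_pi fun _ => isCompact_closedBall _ _
  refine isCompact_iff_compactSpace.1 (h_polydisc.of_isClosed_subset h_closed ?_)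
  intro U hU i _ j _
  simpa using entry_norm_bound_of_unitary hU i j

theorem exists_unitaryGroup_eq_smul_mulVec_single (p : m) (x : m → 𝕜) :
    ∃ (g : unitaryGroup m 𝕜) (c : 𝕜), x = c • (g : Matrix m m 𝕜) *ᵥ Pi.single p 1 := by
  let w : EuclideanSpace 𝕜 m := WithLp.toLp 2 x
  by_cases hw : w = 0
  · refine ⟨1, 0, ?_⟩
    simpa [w] using hw
  let v : EuclideanSpace 𝕜 m := (‖w‖⁻¹ : 𝕜) • w
  have hv : ‖v‖ = 1 := norm_smul_inv_norm hw
  have h_orthonormal : Orthonormal 𝕜 (({p} : Set m).domRestrict fun _ => v) :=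
    ⟨fun _ => hv, fun i j hij => absurd (Subsingleton.elim i j) hij⟩
  obtain ⟨b, hb⟩ := h_orthonormal.exists_orthonormalBasis_extension_of_card_eq (by simp)
  refine ⟨⟨_, (EuclideanSpace.basisFun m 𝕜).toMatrix_orthonormalBasis_mem_unitary b⟩, ‖w‖, ?_⟩
  ext i
  simp [Module.Basis.toMatrix_apply, hb p rfl, v, w, hw]

end UnitaryGroup

section ConjMoment

variable {m : Type*} [Fintype m] [DecidableEq m] [MeasurableSpace (unitaryGroup m ℂ)]

/-- The `k`-th moment `∫ (y* (u A u*) x) ^ k dμ(u)` of the sesquilinear form of a random unitary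
conjugate of `A`, through which the integrals of permanents are computed. The first vector is the
conjugated one, as for `inner`. -/
noncomputable def conjMoment (μ : Measure (unitaryGroup m ℂ)) (A : Matrix m m ℂ) (k : ℕ)
    (y x : m → ℂ) : ℂ :=
  ∫ u, (star y ⬝ᵥ ((u : Matrix m m ℂ) * A * star (u : Matrix m m ℂ)) *ᵥ x) ^ k ∂μ

variable (μ : Measure (unitaryGroup m ℂ)) (A : Matrix m m ℂ) (k : ℕ)

theorem conjMoment_smul_left (c : ℂ) (y x : m → ℂ) :
    conjMoment μ A k (c • y) x = star c ^ k * conjMoment μ A k y x := by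
  simp only [conjMoment, star_smul, smul_dotProduct, smul_eq_mul, mul_pow, integral_const_mul]

theorem conjMoment_smul_right (c : ℂ) (y x : m → ℂ) :
    conjMoment μ A k y (c • x) = c ^ k * conjMoment μ A k y x := by
  simp only [conjMoment, mulVec_smul, dotProduct_smul, smul_eq_mul, mul_pow, integral_const_mul]

theorem conjMoment_single_single (p : m) :
    conjMoment μ A k (Pi.single p 1) (Pi.single p 1) =
      ∫ u, ((u : Matrix m m ℂ) * A * star (u : Matrix m m ℂ)) p p ^ k ∂μ := by
  simp [conjMoment]

variable [BorelSpace (unitaryGroup m ℂ)]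

theorem conjMoment_mulVec_mulVec [μ.IsMulLeftInvariant] (g : unitaryGroup m ℂ) (y x : m → ℂ) :
    conjMoment μ A k ((g : Matrix m m ℂ) *ᵥ y) ((g : Matrix m m ℂ) *ᵥ x) =
      conjMoment μ A k y x := by
  have h_star : star (g : Matrix m m ℂ) * g = 1 := UnitaryGroup.star_mul_self g
  have h_cancel (B : Matrix m m ℂ) :
      star (g : Matrix m m ℂ) * (g * B * star (g : Matrix m m ℂ)) * g = B := by
    rw [← Matrix.mul_assoc, ← Matrix.mul_assoc, h_star, one_mul, Matrix.mul_assoc, h_star, mul_one]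
  rw [conjMoment, ← integral_mul_left_eq_self _ g, conjMoment]
  congr! 3 with u
  rw [star_mulVec, ← dotProduct_mulVec, mulVec_mulVec, mulVec_mulVec, ← star_eq_conjTranspose,
    ← Matrix.mul_assoc]
  simpa [Matrix.mul_assoc] using congrArg (fun M => star y ⬝ᵥ M *ᵥ x)
    (h_cancel ((u : Matrix m m ℂ) * A * star (u : Matrix m m ℂ)))

theorem integrable_dotProduct_conj_mulVec_pow [IsFiniteMeasure μ] (y x : m → ℂ) :
    Integrable (fun u : unitaryGroup m ℂ =>
      (star y ⬝ᵥ ((u : Matrix m m ℂ) * A * star (u : Matrix m m ℂ)) *ᵥ x) ^ k) μ := by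
  refine Continuous.integrable_of_hasCompactSupport ?_ (.of_compactSpace _)
  fun_prop

theorem sum_conjMoment_add_smul_of_isPrimitiveRoot [IsFiniteMeasure μ] {ζ : ℂ} {N : ℕ}
    (hζ : IsPrimitiveRoot ζ N) {k : ℕ} (hk : k < N) (y x z : m → ℂ) :
    ∑ j ∈ Finset.range N, conjMoment μ A k y (x + ζ ^ j • z) = N * conjMoment μ A k y x := by
  simp only [conjMoment]
  rw [← integral_finsetSum _ fun _ _ => integrable_dotProduct_conj_mulVec_pow μ A k _ _,
    ← integral_const_mul]
  simp only [mulVec_add, mulVec_smul, dotProduct_add, dotProduct_smul, smul_eq_mul,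
    sum_add_pow_mul_pow_of_isPrimitiveRoot hζ hk]

theorem factorial_mul_integral_permanent_eq_sum_conjMoment [IsFiniteMeasure μ] {ι : Type*}
    [Fintype ι] [DecidableEq ι] (Y X : Matrix m ι ℂ) :
    (Fintype.card ι).factorial *
        ∫ u, (Yᴴ * ((u : Matrix m m ℂ) * A * star (u : Matrix m m ℂ)) * X).permanent ∂μ =
      ∑ S : Finset ι × Finset ι, (-1) ^ (S.1.card + S.2.card) *
        conjMoment μ A (Fintype.card ι) (∑ i ∈ S.1ᶜ, Y.col i) (∑ j ∈ S.2ᶜ, X.col j) := by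
  rw [← integral_const_mul]
  simp only [factorial_mul_permanent_conjTranspose_mul_mul, conjMoment]
  rw [integral_finsetSum _ fun _ _ =>
    (integrable_dotProduct_conj_mulVec_pow μ A _ _ _).const_mul _]
  simp only [integral_const_mul]

variable [μ.IsMulLeftInvariant]

theorem conjMoment_single_left_add_smul (p : m) (x : m → ℂ) {ζ : ℂ} (hζ : ζ ∈ unitary ℂ) :
    conjMoment μ A k (Pi.single p 1) (x p • Pi.single p 1 + ζ • (x - x p • Pi.single p 1)) =
      conjMoment μ A k (Pi.single p 1) x := by
  have h_unitary (i : m) : Function.update (fun _ => ζ) p 1 i ∈ unitary ℂ := by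
    obtain rfl | hi := eq_or_ne i p <;> simp [*, one_mem]
  rw [← conjMoment_mulVec_mulVec μ A k ⟨_, diagonal_mem_unitaryGroup h_unitary⟩ _ x]
  congr 1
  · simp
  · ext i
    obtain rfl | hi := eq_or_ne i p <;> simp [mulVec_diagonal, *]

variable [IsFiniteMeasure μ]

theorem conjMoment_single_left (p : m) (x : m → ℂ) :
    conjMoment μ A k (Pi.single p 1) x =
      x p ^ k * conjMoment μ A k (Pi.single p 1) (Pi.single p 1) := by
  obtain ⟨ζ, hζ⟩ : ∃ ζ : ℂ, IsPrimitiveRoot ζ (k + 1) :=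
    ⟨_, Complex.isPrimitiveRoot_exp _ k.succ_ne_zero⟩
  have h_unitary : ζ ∈ unitary ℂ :=
    Unitary.mem_iff_star_mul_self.2 <| by
      simp [Complex.conj_mul', hζ.norm'_eq_one k.succ_ne_zero]
  have h_average := sum_conjMoment_add_smul_of_isPrimitiveRoot μ A hζ k.lt_succ_self
    (Pi.single p 1) (x p • Pi.single p 1) (x - x p • Pi.single p 1)
  simp only [conjMoment_single_left_add_smul μ A k p x (pow_mem h_unitary _), Finset.sum_const,
    Finset.card_range, nsmul_eq_mul, conjMoment_smul_right] at h_average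
  exact mul_left_cancel₀ (Nat.cast_ne_zero.2 k.succ_ne_zero) h_average

theorem conjMoment_eq_dotProduct_pow_mul (p : m) (y x : m → ℂ) :
    conjMoment μ A k y x =
      (star y ⬝ᵥ x) ^ k * conjMoment μ A k (Pi.single p 1) (Pi.single p 1) := by
  obtain ⟨g, c, rfl⟩ := exists_unitaryGroup_eq_smul_mulVec_single p y
  have h_dot : star (c • (g : Matrix m m ℂ) *ᵥ Pi.single p 1) ⬝ᵥ x =
      star c * (star (g : Matrix m m ℂ) *ᵥ x) p := by
    rw [star_smul, smul_dotProduct, star_mulVec, ← dotProduct_mulVec]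
    simp [star_eq_conjTranspose]
  have h_inv : (g : Matrix m m ℂ) *ᵥ (star (g : Matrix m m ℂ) *ᵥ x) = x := by
    rw [mulVec_mulVec, mem_unitaryGroup_iff.1 g.2, one_mulVec]
  rw [h_dot, conjMoment_smul_left, mul_pow, mul_assoc, ← conjMoment_single_left,
    ← conjMoment_mulVec_mulVec μ A k g _ (star _ *ᵥ x), h_inv]

end ConjMoment

theorem stmt9_general {m ι : Type*} [Fintype m] [DecidableEq m] [Fintype ι] [DecidableEq ι]
    [MeasurableSpace (unitaryGroup m ℂ)] [BorelSpace (unitaryGroup m ℂ)]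
    (μ : Measure (unitaryGroup m ℂ)) [μ.IsMulLeftInvariant] [IsFiniteMeasure μ]
    (A : Matrix m m ℂ) (Y X : Matrix m ι ℂ) (p : m) :
    ∫ u, (Yᴴ * ((u : Matrix m m ℂ) * A * star (u : Matrix m m ℂ)) * X).permanent ∂μ =
      (Yᴴ * X).permanent *
        ∫ u, ((u : Matrix m m ℂ) * A * star (u : Matrix m m ℂ)) p p ^ Fintype.card ι ∂μ := by
  have h_factorial : ((Fintype.card ι).factorial : ℂ) ≠ 0 :=
    Nat.cast_ne_zero.2 (Nat.factorial_ne_zero _)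
  have h_one := factorial_mul_permanent_conjTranspose_mul_mul Y X 1
  simp only [Matrix.mul_one, one_mulVec] at h_one
  apply mul_left_cancel₀ h_factorial
  rw [factorial_mul_integral_permanent_eq_sum_conjMoment, ← mul_assoc, h_one, Finset.sum_mul,
    ← conjMoment_single_single]
  refine Finset.sum_congr rfl fun S _ => ?_
  rw [conjMoment_eq_dotProduct_pow_mul μ A _ p, mul_assoc]

theorem stmt9 (n : ℕ) (hn : 1 ≤ n)
    (μ : Measure (Matrix.unitaryGroup (Fin n) ℂ))
    [μ.IsMulLeftInvariant] [IsProbabilityMeasure μ]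
    (A : Matrix (Fin n) (Fin n) ℂ) :
    ∫ u, (∑ σ : Equiv.Perm (Fin n), ∏ i, (conjU A u) i (σ i)) ∂μ =
      ∫ u, ((conjU A u) ⟨0, hn⟩ ⟨0, hn⟩) ^ n ∂μ := by
  have h := stmt9_general μ A 1 (1 : Matrix (Fin n) (Fin n) ℂ) ⟨0, hn⟩
  rw [conjTranspose_one, Matrix.mul_one, permanent_one, one_mul, Fintype.card_fin] at h
  simpa only [conjU, Matrix.one_mul, Matrix.mul_one, permanent_eq_sum_prod_apply_perm] using h
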